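/- arXiv:2103.11523 — 2 statements merged into one kernel-verified Lean document; each statement's English description precedes it below -/
import Mathlib

section
/- Let n ≥ 2 and let V ⊆ ℂⁿ be a complex algebraic set, i.e., the common zero locus in ℂⁿ of an ideal I of the polynomial ring ℂ[x₁, …, xₙ]. Suppose V lies in an algebraic region of type (k, n): there exist complementary complex linear subspaces V₁, V₂ of ℂⁿ with dim V₁ = k, dim V₂ = n − k, and positive reals A, B such that every z ∈ V satisfies ‖z''‖ ≤ A(1 + ‖z'‖)^B, where z = z' + z'' with z' ∈ V₁, z'' ∈ V₂. Then dim V ≤ k, where dim V is the Krull dimension of the coordinate ring ℂ[x₁, …, xₙ]/I(V) and I(V) is the vanishing ideal of V. -/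
/-- The vanishing ideal of a subset `S ⊆ ℂⁿ`: all polynomials in
`ℂ[x₁, …, xₙ]` vanishing identically on `S`. -/
noncomputable def vanishingIdeal (n : ℕ) (S : Set (EuclideanSpace ℂ (Fin n))) :
    Ideal (MvPolynomial (Fin n) ℂ) where
  carrier := {f | ∀ z ∈ S, MvPolynomial.eval (fun i => z i) f = 0}
  zero_mem' := by intro z _; simp
  add_mem' := by intro f g hf hg z hz; simp [hf z hz, hg z hz]
  smul_mem' := by intro c f hf z hz; simp [smul_eq_mul, hf z hz]

/-- The dimension of a subset `S ⊆ ℂⁿ`: the Krull dimension of the coordinate ring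
`ℂ[x₁, …, xₙ] / I(S)`, where `I(S)` is the vanishing ideal of `S`. -/
noncomputable def algDim (n : ℕ) (S : Set (EuclideanSpace ℂ (Fin n))) :
    WithBot ℕ∞ :=
  ringKrullDim (MvPolynomial (Fin n) ℂ ⧸ vanishingIdeal n S)

theorem key_const {n : ℕ} (p : Ideal (MvPolynomial (Fin n) ℂ)) [hp : p.IsPrime]
    (f : MvPolynomial (Fin n) ℂ) (M : ℝ)
    (hM : ∀ w : Fin n → ℂ, (∀ g ∈ p, MvPolynomial.eval w g = 0) → ‖MvPolynomial.eval w f‖ ≤ M) :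
    ∃ c : ℂ, f - MvPolynomial.C c ∈ p := by
  let D := MvPolynomial (Fin n) ℂ ⧸ p
  let E := FractionRing D
  let y : D := Ideal.Quotient.mk p f
  -- units
  have hunit : ∀ c : ℂ, M < ‖c‖ → IsUnit (y - algebraMap ℂ D c) := by
    intro c hc
    by_contra hnu
    obtain ⟨m, hm, hmem⟩ := exists_max_ideal_of_mem_nonunits hnu
    have hm' : (m.comap (Ideal.Quotient.mk p)).IsMaximal :=
      Ideal.comap_isMaximal_of_surjective _ Ideal.Quotient.mk_surjective
    obtain ⟨w, hw⟩ := (MvPolynomial.isMaximal_iff_eq_vanishingIdeal_singleton).1 hm'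
    have hw' : ∀ g, Ideal.Quotient.mk p g ∈ m → MvPolynomial.eval w g = 0 := by
      intro g hg
      have : g ∈ m.comap (Ideal.Quotient.mk p) := hg
      rw [hw, MvPolynomial.mem_vanishingIdeal_singleton_iff] at this
      simpa using this
    have h1 := hM w (fun g hg => hw' g (by
      rw [Ideal.Quotient.eq_zero_iff_mem.2 hg]; exact m.zero_mem))
    have h2 := hw' (f - MvPolynomial.C c) (by
      rw [map_sub]; exact hmem)
    rw [map_sub, MvPolynomial.eval_C, sub_eq_zero] at h2
    rw [h2] at h1
    linarith
  have halg : IsAlgebraic ℂ (algebraMap D E y) := by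
    by_contra htr
    have hli := Transcendental.linearIndependent_sub_inv (F := ℂ) (E := E) htr
    let S := {c : ℂ // M < ‖c‖}
    have hli2 := hli.comp (fun c : S => c.1) Subtype.val_injective
    let u : S → D := fun c => ((hunit c.1 c.2).unit⁻¹ : Dˣ)
    have hu : LinearIndependent ℂ u := by
      apply LinearIndependent.of_comp (IsScalarTower.toAlgHom ℂ D E).toLinearMap
      have hfun : (⇑(IsScalarTower.toAlgHom ℂ D E).toLinearMap ∘ u) =
          ((fun a => ((algebraMap D E) y - (algebraMap ℂ E) a)⁻¹) ∘ fun c : S => c.1) := by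
        funext c
        have h3 : (y - algebraMap ℂ D c.1) * u c = 1 := (hunit c.1 c.2).mul_val_inv
        have h4 := congrArg (algebraMap D E) h3
        rw [map_mul, map_sub, map_one, ← IsScalarTower.algebraMap_apply] at h4
        exact eq_inv_of_mul_eq_one_right h4
      rw [hfun]
      exact hli2
    have hrank : Module.rank ℂ D ≤ Cardinal.aleph0 := by
      have h5 : Module.rank ℂ D ≤ Module.rank ℂ (MvPolynomial (Fin n) ℂ) :=
        LinearMap.rank_le_of_surjective (Ideal.Quotient.mkₐ ℂ p).toLinearMap
          Ideal.Quotient.mk_surjective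
      refine h5.trans ?_
      rw [← (MvPolynomial.basisMonomials (Fin n) ℂ).mk_eq_rank'']
      exact Cardinal.mk_le_aleph0
    have h6 : Cardinal.mk S ≤ Cardinal.aleph0 := hu.cardinal_le_rank.trans hrank
    have h7 : Countable S := Cardinal.mk_le_aleph0_iff.1 h6
    have h8 : ((fun c : ℝ => ((c : ℝ) : ℂ)) ⁻¹' {c : ℂ | M < ‖c‖}).Countable :=
      Set.Countable.preimage (Set.countable_coe_iff.1 h7) Complex.ofReal_injective
    have h9 : (Set.Ioi |M|).Countable := h8.mono (by
      intro x hx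
      have : |M| < x := hx
      simp only [Set.mem_preimage, Set.mem_ofPred_eq, Complex.norm_real, Real.norm_eq_abs]
      linarith [le_abs_self M, le_abs_self x])
    have h10 := h9.le_aleph0
    rw [Cardinal.mk_Ioi_real] at h10
    exact absurd h10 (not_le.2 Cardinal.aleph0_lt_continuum)
  have halgD : IsIntegral ℂ y := by
    have := (isAlgebraic_algebraMap_iff (IsFractionRing.injective D E)).1 halg
    exact this.isIntegral
  have hq : (minpoly ℂ y).leadingCoeff = 1 := minpoly.monic halgD
  have h : (minpoly ℂ y).degree = 1 :=
    IsAlgClosed.degree_eq_one_of_irreducible ℂ (minpoly.irreducible halgD)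
  have h0 : Polynomial.aeval y (minpoly ℂ y) = 0 := minpoly.aeval ℂ y
  rw [Polynomial.eq_X_add_C_of_degree_eq_one h, hq, Polynomial.C_1, one_mul, Polynomial.aeval_add,
    Polynomial.aeval_X, Polynomial.aeval_C] at h0
  refine ⟨-(minpoly ℂ y).coeff 0, ?_⟩
  rw [← Ideal.Quotient.eq_zero_iff_mem, map_neg, sub_neg_eq_add, map_add]
  exact h0

theorem statement_aux {n : ℕ} (p : Ideal (MvPolynomial (Fin n) ℂ)) [hp : p.IsPrime] (M : ℝ)
    (hM : ∀ w : Fin n → ℂ, (∀ g ∈ p, MvPolynomial.eval w g = 0) → ∀ i, ‖w i‖ ≤ M) :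
    p.IsMaximal := by
  have h : ∀ i, ∃ c : ℂ, MvPolynomial.X i - MvPolynomial.C c ∈ p := fun i =>
    key_const p (MvPolynomial.X i) M (fun w hw => by simpa using hM w hw i)
  choose c hc using h
  have h1 : Ideal.Quotient.mkₐ ℂ p =
      (Algebra.ofId ℂ (MvPolynomial (Fin n) ℂ ⧸ p)).comp (MvPolynomial.aeval c) := by
    apply MvPolynomial.algHom_ext
    intro i
    have := Ideal.Quotient.eq_zero_iff_mem.2 (hc i)
    rw [map_sub, sub_eq_zero] at this
    simp only [AlgHom.comp_apply, MvPolynomial.aeval_X]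
    exact this
  have h2 : MvPolynomial.vanishingIdeal ℂ {c} ≤ p := by
    intro g hg
    rw [MvPolynomial.mem_vanishingIdeal_singleton_iff] at hg
    rw [← Ideal.Quotient.eq_zero_iff_mem]
    have := DFunLike.congr_fun h1 g
    rw [AlgHom.comp_apply, hg, map_zero] at this
    exact this
  have h3 : (MvPolynomial.vanishingIdeal ℂ {c} : Ideal (MvPolynomial (Fin n) ℂ)).IsMaximal :=
    MvPolynomial.isMaximal_iff_eq_vanishingIdeal_singleton.2 ⟨c, rfl⟩
  rw [← h3.eq_of_le hp.ne_top h2]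
  exact h3

/-- Let `V ⊆ ℂⁿ` be a complex algebraic set, i.e. the common zero
locus of an ideal `I` of `ℂ[x₁, …, xₙ]`.  Suppose `V` lies in an algebraic region of
type `(k, n)`: there exist complementary complex subspaces `V₁, V₂` with
`dim V₁ = k`, `dim V₂ = n - k`, and positive reals `A, B` such that every `z ∈ V`
satisfies `‖z''‖ ≤ A(1 + ‖z'‖)^B`, where `π : z ↦ z'` is the projection onto `V₁`
along `V₂` and `z'' = z - π z`.  Then `dim V ≤ k`, where `dim V` is the Krull
dimension of `ℂ[x₁, …, xₙ]/I(V)`. -/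
theorem statement3 (n k : ℕ) (hn : 2 ≤ n)
    (I : Ideal (MvPolynomial (Fin n) ℂ))
    (V : Set (EuclideanSpace ℂ (Fin n)))
    (hValg : V = {z | ∀ f ∈ I, MvPolynomial.eval (fun i => z i) f = 0})
    (V₁ V₂ : Submodule ℂ (EuclideanSpace ℂ (Fin n))) (hcompl : IsCompl V₁ V₂)
    (hk₁ : Module.finrank ℂ V₁ = k) (hk₂ : Module.finrank ℂ V₂ = n - k)
    (π : EuclideanSpace ℂ (Fin n) → EuclideanSpace ℂ (Fin n))
    (hπ : ∀ z, π z ∈ V₁ ∧ z - π z ∈ V₂)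
    (A B : ℝ) (hA : 0 < A) (hB : 0 < B)
    (hVΩ : ∀ z ∈ V, ‖z - π z‖ ≤ A * (1 + ‖π z‖) ^ B) :
    algDim n V ≤ (k : WithBot ℕ∞) := by
  classical
  let P := V₁.projectionOnto V₂ hcompl
  have hP : ∀ z, π z = (P z : EuclideanSpace ℂ (Fin n)) := by
    intro z
    have h1 : P (π z) = ⟨π z, (hπ z).1⟩ := Submodule.projectionOnto_apply_of_mem_left hcompl _
    have h2 : P (z - π z) = 0 := (Submodule.projectionOnto_apply_eq_zero_iff hcompl).2 (hπ z).2
    rw [map_sub, sub_eq_zero] at h2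
    rw [h2, h1]
  let b := Module.finBasisOfFinrankEq ℂ V₁ hk₁
  let L : Fin k → MvPolynomial (Fin n) ℂ := fun j =>
    ∑ i, MvPolynomial.C (b.coord j (P (EuclideanSpace.single i 1))) * MvPolynomial.X i
  have hL : ∀ j (w : EuclideanSpace ℂ (Fin n)),
      MvPolynomial.eval (fun i => w i) (L j) = b.coord j (P w) := by
    intro j w
    have hw : w = ∑ i, w i • EuclideanSpace.single i (1 : ℂ) := by
      ext i
      simp [Finset.sum_apply, Pi.single_apply]
    conv_rhs => rw [hw]
    simp only [L, map_sum, map_mul, MvPolynomial.eval_C, MvPolynomial.eval_X, map_smul,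
      smul_eq_mul, mul_comm]
  unfold algDim
  rw [ringKrullDim_le_iff_isMaximal_height_le]
  intro m hm
  have hm' : (m.comap (Ideal.Quotient.mk (vanishingIdeal n V))).IsMaximal :=
    Ideal.comap_isMaximal_of_surjective _ Ideal.Quotient.mk_surjective
  obtain ⟨z0, hz0⟩ := (MvPolynomial.isMaximal_iff_eq_vanishingIdeal_singleton).1 hm'
  let z : EuclideanSpace ℂ (Fin n) := WithLp.toLp 2 z0
  let G : Fin k → MvPolynomial (Fin n) ℂ := fun j => L j - MvPolynomial.C (b.coord j (P z))
  let T := Set.range (fun j => Ideal.Quotient.mk (vanishingIdeal n V) (G j))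
  have hmin : m ∈ (Ideal.span T).minimalPrimes := by
    refine ⟨⟨hm.isPrime, ?_⟩, ?_⟩
    · rw [Ideal.span_le]
      rintro _ ⟨j, rfl⟩
      change G j ∈ m.comap (Ideal.Quotient.mk (vanishingIdeal n V))
      rw [hz0, MvPolynomial.mem_vanishingIdeal_singleton_iff, MvPolynomial.aeval_eq_eval]
      have := hL j z
      simp only [G]
      rw [map_sub, MvPolynomial.eval_C, sub_eq_zero]
      exact this
    · rintro q ⟨hq, hTq⟩ hqm
      have hqp : (q.comap (Ideal.Quotient.mk (vanishingIdeal n V))).IsPrime :=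
        Ideal.comap_isPrime _ _
      have hqmax : (q.comap (Ideal.Quotient.mk (vanishingIdeal n V))).IsMaximal := by
        apply statement_aux _ (‖π z‖ + A * (1 + ‖π z‖) ^ B)
        intro w0 hw0 i
        let w : EuclideanSpace ℂ (Fin n) := WithLp.toLp 2 w0
        have hwV : w ∈ V := by
          rw [hValg]
          intro f hf
          apply hw0
          have hfV : f ∈ vanishingIdeal n V := by
            intro v hv
            rw [hValg] at hv
            exact hv f hf
          rw [Ideal.mem_comap, Ideal.Quotient.eq_zero_iff_mem.2 hfV]
          exact q.zero_mem
        have hPw : P w = P z := by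
          apply b.ext_elem
          intro j
          have h1 := hw0 (G j) (hTq (Ideal.subset_span ⟨j, rfl⟩))
          simp only [G] at h1
          rw [map_sub, MvPolynomial.eval_C, sub_eq_zero] at h1
          exact (hL j w).symm.trans h1
        have hπw : π w = π z := by rw [hP, hP, hPw]
        have h2 := hVΩ w hwV
        rw [hπw] at h2
        have h3 : ‖w i‖ ≤ ‖w‖ := PiLp.norm_apply_le w i
        have h4 : ‖w‖ ≤ ‖π z‖ + ‖w - π z‖ := by
          simpa using norm_add_le (π z) (w - π z)
        exact h3.trans (h4.trans (by linarith))
      have heq := hqmax.eq_of_le hm'.ne_top (Ideal.comap_mono hqm)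
      exact (Ideal.comap_injective_of_surjective _ Ideal.Quotient.mk_surjective heq).ge
  have h1 := Ideal.height_le_spanRank_toENat_of_mem_minimalPrimes _ _ hmin
  have h2 : (Ideal.span T).spanRank ≤ (k : Cardinal) := by
    refine (Submodule.spanRank_span_le_card T).trans ?_
    refine Cardinal.mk_range_le.trans ?_
    simp
  have h3 : (Ideal.span T).spanRank.toENat ≤ (k : ℕ∞) := by
    simpa using Cardinal.toENat.monotone' h2
  exact_mod_cast h1.trans h3
end

section
/- Let n ≥ 2 and let V ⊆ ℂⁿ be an unbounded complex algebraic set, i.e., the unbounded common zero locus in ℂⁿ of an ideal of ℂ[x₁, …, xₙ]. Let C_∞(V) = {v ∈ ℂⁿ : there exist sequences (x_j) in V and (t_j) in ℂ with ‖x_j‖ → ∞ and t_j x_j → v} be its (geometric) tangent cone at infinity. Then dim V = dim C_∞(V), where for a subset S ⊆ ℂⁿ, dim S denotes the Krull dimension of the coordinate ring ℂ[x₁, …, xₙ]/I(S) and I(S) is the ideal of all polynomials vanishing identically on S. -/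
/-- The geometric tangent cone at infinity of `V ⊆ ℂⁿ`: the set of `v ∈ ℂⁿ` for which
there exist sequences `x j ∈ V` and `t j ∈ ℂ` with `‖x j‖ → ∞` and `t j • x j → v`. -/
def geomTangentConeAtInfty (n : ℕ) (V : Set (EuclideanSpace ℂ (Fin n))) :
    Set (EuclideanSpace ℂ (Fin n)) :=
  {v | ∃ x : ℕ → EuclideanSpace ℂ (Fin n), ∃ t : ℕ → ℂ, (∀ j, x j ∈ V) ∧
    Filter.Tendsto (fun j => ‖x j‖) Filter.atTop Filter.atTop ∧
    Filter.Tendsto (fun j => t j • x j) Filter.atTop (nhds v)}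

section AlgLemmas
section
open MvPolynomial

theorem kd_integral {R S : Type*} [CommRing R] [CommRing S] [Algebra R S]
    [Algebra.IsIntegral R S] (hinj : Function.Injective (algebraMap R S)) :
    ringKrullDim R = ringKrullDim S := by
  apply le_antisymm
  · unfold ringKrullDim Order.krullDim
    apply iSup_le
    intro l
    have := l.head.isPrime
    obtain ⟨P, -, hP, hPc⟩ := Ideal.exists_ideal_over_prime_of_isIntegral (S := S)
      l.head.asIdeal ⊥ (by
        intro x hx
        have : x = 0 := hinj (by simpa using hx)
        simp [this])
    have : P.LiesOver (RelSeries.head l).asIdeal := ⟨hPc.symm⟩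
    have : Algebra.HasGoingUp R S := inferInstance
    obtain ⟨L, hL, -⟩ := Ideal.exists_ltSeries_of_hasGoingUp (S := S) l P
    rw [← hL]
    exact le_iSup (fun p : LTSeries (PrimeSpectrum S) => (p.length : WithBot ℕ∞)) L
  · apply Order.krullDim_le_of_strictMono (PrimeSpectrum.comap (algebraMap R S))
    intro a b hab
    exact Ideal.IsIntegral.comap_lt_comap (R := R) hab

theorem dense_ne_zero {r : ℕ} (h : MvPolynomial (Fin r) ℂ) (hh : h ≠ 0) (b : Fin r → ℂ) :
    b ∈ closure {c | eval c h ≠ 0} := by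
  obtain ⟨c, hc⟩ : ∃ c, eval c h ≠ 0 := by
    by_contra! H
    exact hh (MvPolynomial.funext (by simpa using H))
  let u : Polynomial ℂ := aeval (fun i => Polynomial.C (b i) + Polynomial.X * Polynomial.C (c i - b i)) h
  have hu : ∀ t, u.eval t = eval (fun i => b i + t * (c i - b i)) h := by
    intro t
    have : (Polynomial.evalRingHom t).comp (aeval (fun i => Polynomial.C (b i) + Polynomial.X * Polynomial.C (c i - b i)) : MvPolynomial (Fin r) ℂ →ₐ[ℂ] Polynomial ℂ).toRingHom = eval (fun i => b i + t * (c i - b i)) := by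
      apply MvPolynomial.ringHom_ext <;> intros <;> simp
    exact congrArg (fun f => f h) this
  have hu0 : u ≠ 0 := by
    intro h0
    have := hu 1
    simp [h0] at this
    exact hc this.symm
  have hfin : {t | u.eval t = 0}.Finite := by
    refine (u.roots.toFinset.finite_toSet).subset ?_
    intro t ht
    simpa [hu0] using ht
  have hd : Dense {t | u.eval t = 0}ᶜ := hfin.countable.dense_compl ℝ
  have := map_mem_closure (f := fun t : ℂ => (fun i => b i + t * (c i - b i))) (by fun_prop) (hd 0)
    (t := {c | eval c h ≠ 0}) (by
      intro t ht
      simpa [hu] using ht)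
  simpa using this

theorem exists_zero {σ : Type*} [Finite σ] (M : Ideal (MvPolynomial σ ℂ)) (hM : M ≠ ⊤) :
    ∃ q : σ → ℂ, ∀ f ∈ M, eval q f = 0 := by
  obtain ⟨N, hN, hMN⟩ := Ideal.exists_le_maximal M hM
  obtain ⟨q, hq⟩ := isMaximal_iff_eq_vanishingIdeal_singleton.1 hN
  refine ⟨q, fun f hf => ?_⟩
  have := hMN hf
  rw [hq, mem_vanishingIdeal_singleton_iff] at this
  simpa using this

theorem root_bound (P : Polynomial ℂ) (hP : P.Monic) (z : ℂ) (hz : P.eval z = 0) :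
    ‖z‖ ≤ 1 + ∑ j ∈ Finset.range P.natDegree, ‖P.coeff j‖ := by
  have h := Polynomial.IsRoot.norm_lt_cauchyBound hP.ne_zero (a := z) hz
  have h2 : (P.cauchyBound : ℝ) ≤ 1 + ∑ j ∈ Finset.range P.natDegree, ‖P.coeff j‖ := by
    have : P.cauchyBound ≤ 1 + ∑ j ∈ Finset.range P.natDegree, ‖P.coeff j‖₊ := by
      rw [Polynomial.cauchyBound, hP.leadingCoeff, add_comm]
      simp only [nnnorm_one, div_one]
      gcongr
      apply Finset.sup_le
      intro j hj
      exact Finset.single_le_sum (f := fun j => ‖P.coeff j‖₊) (by simp) hj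
    have h3 := NNReal.coe_le_coe.2 this
    push_cast at h3
    exact h3
  exact (NNReal.coe_le_coe.2 h.le).trans h2

theorem small_root (P : Polynomial ℂ) (hP : P.Monic) (hd : P.natDegree ≠ 0) :
    ∃ z, P.eval z = 0 ∧ ‖z‖ ^ P.natDegree ≤ ‖P.coeff 0‖ := by
  by_contra! H
  have hs := IsAlgClosed.splits P
  have hcard : P.roots.card = P.natDegree := hs.natDegree_eq_card_roots.symm
  have h0 := hs.coeff_zero_eq_prod_roots_of_monic hP
  have hpos : ∀ z ∈ P.roots, ‖P.coeff 0‖ < ‖z‖ ^ P.natDegree := fun z hz => H z (by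
    simpa using (Polynomial.mem_roots'.1 hz).2)
  obtain ⟨z, hz, hmin⟩ : ∃ z ∈ P.roots, ∀ w ∈ P.roots, ‖z‖ ≤ ‖w‖ := by
    have hne : P.roots.toFinset.Nonempty := by
      rw [Multiset.toFinset_nonempty]
      intro h; rw [h] at hcard; simp at hcard; exact hd hcard.symm
    obtain ⟨z, hz, hm⟩ := P.roots.toFinset.exists_min_image (fun z => ‖z‖) hne
    exact ⟨z, by simpa using hz, fun w hw => hm w (by simpa using hw)⟩
  have h1 : ‖P.coeff 0‖ = (P.roots.map (fun z => ‖z‖)).prod := by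
    rw [h0, norm_mul, norm_pow, norm_neg, norm_one, one_pow, one_mul]
    exact map_multiset_prod (normHom : ℂ →*₀ ℝ) P.roots
  have h2 : ‖z‖ ^ P.natDegree ≤ (P.roots.map (fun z => ‖z‖)).prod := by
    rw [← hcard]
    have := Multiset.prod_map_le_prod_map₀ (s := P.roots) (fun _ => ‖z‖) (fun w => ‖w‖)
      (fun _ _ => norm_nonneg _) hmin
    simpa using this
  have := hpos z hz
  linarith

end

section
open MvPolynomial

/-- Separate a point from finitely many others by a polynomial. -/
theorem exists_separating {σ : Type*} (F : Set (σ → ℂ)) (hF : F.Finite) (p : σ → ℂ) :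
    ∃ G : MvPolynomial σ ℂ, eval p G = 0 ∧ ∀ q ∈ F, eval q G = 0 → q = p := by
  classical
  have hch : ∀ q : σ → ℂ, q ≠ p → ∃ i, p i - q i ≠ 0 := by
    intro q hq
    by_contra! H
    exact hq (funext fun i => (sub_eq_zero.1 (H i)).symm)
  rcases isEmpty_or_nonempty σ with hσ | hσ
  · exact ⟨0, by simp, fun q _ _ => Subsingleton.elim _ _⟩
  choose! ι hι using hch
  refine ⟨1 - ∏ q ∈ hF.toFinset.filter (· ≠ p),
    (C (p (ι q) - q (ι q))⁻¹ * (X (ι q) - C (q (ι q)))), ?_, ?_⟩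
  · rw [map_sub, map_one, map_prod, Finset.prod_eq_one, sub_self]
    intro q hq
    have := hι q (by simpa using (Finset.mem_filter.1 hq).2)
    simp [this]
  · intro q hq h
    by_contra hne
    rw [map_sub, map_one, map_prod, Finset.prod_eq_zero (i := q)] at h
    · simp at h
    · simp [hq, hne]
    · simp

theorem density_aux {σ : Type} [Fintype σ] {S : Type} [CommRing S] [IsDomain S] {r : ℕ}
    [Algebra (MvPolynomial (Fin r) ℂ) S] [Algebra.IsIntegral (MvPolynomial (Fin r) ℂ) S]
    [FaithfulSMul (MvPolynomial (Fin r) ℂ) S]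
    (π : MvPolynomial σ ℂ →+* S) (hπ : Function.Surjective π)
    (hπC : ∀ c, π (C c) = algebraMap (MvPolynomial (Fin r) ℂ) S (C c))
    (s : MvPolynomial σ ℂ) (hs : π s ≠ 0) (p : σ → ℂ) (hp : ∀ f, π f = 0 → eval p f = 0) :
    p ∈ closure {q : σ → ℂ | (∀ f, π f = 0 → eval q f = 0) ∧ eval q s ≠ 0} := by
  classical
  have hInteg : ∀ a : S, IsIntegral (MvPolynomial (Fin r) ℂ) a := fun a => Algebra.IsIntegral.isIntegral a
  have hY : ∀ i, ∃ y : MvPolynomial σ ℂ, π y = algebraMap (MvPolynomial (Fin r) ℂ) S (X i) :=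
    fun i => hπ _
  choose Y hY using hY
  let b : (σ → ℂ) → (Fin r → ℂ) := fun q i => eval q (Y i)
  have hbc : Continuous b := continuous_pi fun i => MvPolynomial.continuous_eval _
  let φ : (q : σ → ℂ) → (∀ f, π f = 0 → eval q f = 0) → (S →+* ℂ) :=
    fun q hq => (RingHom.liftOfSurjective π hπ ⟨eval q, fun f hf => hq f hf⟩)
  have hφ : ∀ q hq f, φ q hq (π f) = eval q f := fun q hq f =>
    RingHom.liftOfSurjective_comp_apply _ _ _ _
  have hφR : ∀ q hq (f : (MvPolynomial (Fin r) ℂ)), φ q hq (algebraMap (MvPolynomial (Fin r) ℂ) S f) = eval (b q) f := by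
    intro q hq f
    have : ((φ q hq).comp (algebraMap (MvPolynomial (Fin r) ℂ) S)) = eval (b q) := by
      apply MvPolynomial.ringHom_ext
      · intro c
        have : algebraMap (MvPolynomial (Fin r) ℂ) S (C c) = π (C c) := (hπC c).symm
        simp [this, hφ]
      · intro i
        have : algebraMap (MvPolynomial (Fin r) ℂ) S (X i) = π (Y i) := (hY i).symm
        simp [this, hφ, b]
    exact congrArg (fun h => h f) this
  have hroot : ∀ q hq (a : S), ((minpoly (MvPolynomial (Fin r) ℂ) a).map (eval (b q))).eval (φ q hq a) = 0 := by
    intro q hq a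
    have h1 : φ q hq (Polynomial.aeval a (minpoly (MvPolynomial (Fin r) ℂ) a)) = 0 := by rw [minpoly.aeval]; simp
    rw [Polynomial.aeval_def, Polynomial.hom_eval₂] at h1
    rw [Polynomial.eval_map, ← h1]
    congr 1
    exact RingHom.ext fun f => (hφR q hq f).symm
  have hlift : ∀ (β : Fin r → ℂ) (a : S) (τ : ℂ), ((minpoly (MvPolynomial (Fin r) ℂ) a).map (eval β)).eval τ = 0 →
      ∃ q, ∃ hq : ∀ f, π f = 0 → eval q f = 0, b q = β ∧ φ q hq a = τ := by
    intro β a τ hτ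
    let _ : Algebra (Polynomial (MvPolynomial (Fin r) ℂ)) S := (Polynomial.aeval a).toRingHom.toAlgebra
    have halg : ∀ f : Polynomial (MvPolynomial (Fin r) ℂ), algebraMap (Polynomial (MvPolynomial (Fin r) ℂ)) S f = Polynomial.aeval a f := fun _ => rfl
    have : IsScalarTower (MvPolynomial (Fin r) ℂ) (Polynomial (MvPolynomial (Fin r) ℂ)) S := IsScalarTower.of_algebraMap_eq (by
      intro x; rw [halg]; simp)
    have : Algebra.IsIntegral (Polynomial (MvPolynomial (Fin r) ℂ)) S := ⟨fun x => (hInteg x).tower_top⟩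
    let ev : Polynomial (MvPolynomial (Fin r) ℂ) →+* ℂ := Polynomial.eval₂RingHom (eval β) τ
    have hevC : ∀ f, ev (Polynomial.C f) = eval β f := fun f => by simp [ev]
    have hevX : ev Polynomial.X = τ := by simp [ev]
    have hev : (RingHom.ker ev).IsPrime := RingHom.ker_isPrime ev
    obtain ⟨N, -, hN, hNc⟩ := Ideal.exists_ideal_over_prime_of_isIntegral (S := S)
      (RingHom.ker ev) ⊥ (by
        intro x hx
        have hx' : Polynomial.aeval a x = 0 := by simpa [halg] using hx
        obtain ⟨y, rfl⟩ := minpoly.isIntegrallyClosed_dvd (hInteg a) hx'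
        rw [RingHom.mem_ker, map_mul]
        have : ev (minpoly (MvPolynomial (Fin r) ℂ) a) = 0 := by
          rw [← hτ, Polynomial.eval_map]; rfl
        rw [this, zero_mul])
    obtain ⟨q, hq⟩ := exists_zero (N.comap π) (Ideal.comap_ne_top _ hN.ne_top)
    have hqQ : ∀ f, π f = 0 → eval q f = 0 := fun f hf => hq f (by
      rw [Ideal.mem_comap, hf]; exact N.zero_mem)
    have hkill : ∀ x : S, x ∈ N → φ q hqQ x = 0 := by
      intro x hx
      obtain ⟨f, rfl⟩ := hπ x
      rw [hφ]; exact hq f hx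
    have hkill' : ∀ f : Polynomial (MvPolynomial (Fin r) ℂ), ev f = 0 → φ q hqQ (Polynomial.aeval a f) = 0 := by
      intro f hf
      apply hkill
      have : f ∈ N.comap (algebraMap (Polynomial (MvPolynomial (Fin r) ℂ)) S) := by rw [hNc]; exact hf
      exact this
    refine ⟨q, hqQ, ?_, ?_⟩
    · funext i
      have := hkill' (Polynomial.C (X i - C (β i))) (by rw [hevC]; simp)
      rw [Polynomial.aeval_C, hφR] at this
      simpa [sub_eq_zero] using this
    · have := hkill' (Polynomial.X - Polynomial.C (C τ)) (by rw [map_sub, hevC, hevX]; simp)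
      rw [map_sub, Polynomial.aeval_C, map_sub, hφR] at this
      simpa [sub_eq_zero] using this
  let F : Set (σ → ℂ) := {q | (∀ f, π f = 0 → eval q f = 0) ∧ b q = b p}
  let m : σ → Polynomial (MvPolynomial (Fin r) ℂ) := fun i => minpoly (MvPolynomial (Fin r) ℂ) (π (X i))
  have hmm : ∀ i, (m i).Monic := fun i => minpoly.monic (hInteg _)
  have hmroot : ∀ q (_ : ∀ f, π f = 0 → eval q f = 0) i, ((m i).map (eval (b q))).eval (q i) = 0 := by
    intro q hq i
    have := hroot q hq (π (X i))
    rwa [hφ, eval_X] at this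
  have hF : F.Finite := by
    refine (Set.Finite.pi (t := fun i => (((m i).map (eval (b p))).roots.toFinset : Set ℂ))
      (fun i => Finset.finite_toSet _)).subset ?_
    rintro q ⟨hq, hqb⟩ i -
    have h1 := hmroot q hq i
    rw [hqb] at h1
    have h2 : ((m i).map (eval (b p))) ≠ 0 := ((hmm i).map _).ne_zero
    simpa [h2] using h1
  obtain ⟨G, hGp, hGF⟩ := exists_separating F hF p
  let sb : S := π s
  have hsb : sb ≠ 0 := hs
  let h : (MvPolynomial (Fin r) ℂ) := (minpoly (MvPolynomial (Fin r) ℂ) sb).coeff 0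
  have hh : h ≠ 0 := by
    intro h0
    have h1 := minpoly.aeval (MvPolynomial (Fin r) ℂ) sb
    have hX : minpoly (MvPolynomial (Fin r) ℂ) sb =
        (minpoly (MvPolynomial (Fin r) ℂ) sb).divX * Polynomial.X := by
      conv_lhs => rw [← Polynomial.divX_mul_X_add (minpoly (MvPolynomial (Fin r) ℂ) sb)]
      have : (minpoly (MvPolynomial (Fin r) ℂ) sb).coeff 0 = 0 := h0
      rw [this]; simp
    have hne := minpoly.ne_zero (hInteg sb)
    have hd0 : (minpoly (MvPolynomial (Fin r) ℂ) sb).divX ≠ 0 := by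
      intro h; rw [h, zero_mul] at hX; exact hne hX
    have hlt := minpoly.IsIntegrallyClosed.degree_le_of_ne_zero (s := sb) hd0 (by
      rw [hX, map_mul, Polynomial.aeval_X] at h1
      exact (mul_eq_zero.1 h1).resolve_right hsb)
    exact absurd hlt (not_le.2 (Polynomial.degree_divX_lt hne))
  have hhs : ∀ q (_ : ∀ f, π f = 0 → eval q f = 0), eval (b q) h ≠ 0 → eval q s ≠ 0 := by
    intro q hq hne h0
    have := hroot q hq sb
    rw [hφ, h0, ← Polynomial.coeff_zero_eq_eval_zero, Polynomial.coeff_map] at this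
    exact hne this
  obtain ⟨β, hβ, hβt⟩ := mem_closure_iff_seq_limit.1 (dense_ne_zero h hh (b p))
  let mG : Polynomial (MvPolynomial (Fin r) ℂ) := minpoly (MvPolynomial (Fin r) ℂ) (π G)
  have hmG : mG.Monic := minpoly.monic (hInteg _)
  have hdeg : ∀ c, (mG.map (eval c)).natDegree = mG.natDegree := fun c => hmG.natDegree_map _
  have hdpos : mG.natDegree ≠ 0 := (minpoly.natDegree_pos (hInteg _)).ne'
  have hτ : ∀ k, ∃ τ, (mG.map (eval (β k))).eval τ = 0 ∧
      ‖τ‖ ^ mG.natDegree ≤ ‖eval (β k) (mG.coeff 0)‖ := by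
    intro k
    obtain ⟨z, hz, hz2⟩ := small_root (mG.map (eval (β k))) (hmG.map _) (by rwa [hdeg])
    rw [hdeg, Polynomial.coeff_map] at hz2
    exact ⟨z, hz, hz2⟩
  choose τ hτ hτ2 using hτ
  choose q hq hqb hqG using fun k => hlift (β k) (π G) (τ k) (hτ k)
  have hc0 : eval (b p) (mG.coeff 0) = 0 := by
    have := hroot p hp (π G)
    rwa [hφ, hGp, ← Polynomial.coeff_zero_eq_eval_zero, Polynomial.coeff_map] at this
  have hτ0 : Filter.Tendsto τ Filter.atTop (nhds 0) := by
    have h1 : Filter.Tendsto (fun k => ‖eval (β k) (mG.coeff 0)‖) Filter.atTop (nhds 0) := by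
      have := ((MvPolynomial.continuous_eval (mG.coeff 0)).norm.tendsto (b p)).comp hβt
      simpa [hc0, Function.comp_def] using this
    have h2 : Filter.Tendsto (fun k => ‖τ k‖ ^ mG.natDegree) Filter.atTop (nhds 0) :=
      squeeze_zero (fun _ => by positivity) hτ2 h1
    have h3 : Filter.Tendsto (fun k => (‖τ k‖ ^ mG.natDegree) ^ ((mG.natDegree : ℝ)⁻¹)) Filter.atTop
        (nhds ((0:ℝ) ^ ((mG.natDegree : ℝ)⁻¹))) :=
      h2.rpow_const (Or.inr (by positivity))
    rw [Real.zero_rpow (by simpa using hdpos)] at h3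
    rw [tendsto_zero_iff_norm_tendsto_zero]
    refine h3.congr fun k => Real.pow_rpow_inv_natCast (norm_nonneg _) hdpos
  have hbdd : ∃ B : ℝ, ∀ k, q k ∈ Metric.closedBall (0 : σ → ℂ) B := by
    have hi : ∀ i, ∃ B : ℝ, ∀ k, ‖q k i‖ ≤ B := by
      intro i
      let w : (Fin r → ℂ) → ℝ := fun c => 1 + ∑ j ∈ Finset.range (m i).natDegree, ‖eval c ((m i).coeff j)‖
      have hw : Continuous w := by
        refine continuous_const.add (continuous_finsetSum _ fun j _ =>
          (MvPolynomial.continuous_eval _).norm)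
      have hwt : Filter.Tendsto (fun k => w (β k)) Filter.atTop (nhds (w (b p))) :=
        (hw.tendsto (b p)).comp hβt
      obtain ⟨B, hB⟩ := hwt.bddAbove_range
      refine ⟨B, fun k => le_trans ?_ (hB ⟨k, rfl⟩)⟩
      have h1 := root_bound _ ((hmm i).map (eval (b (q k)))) _ (hmroot (q k) (hq k) i)
      rw [hqb k, (hmm i).natDegree_map] at h1
      simpa [w, Polynomial.coeff_map] using h1
    choose B hB using hi
    refine ⟨∑ i, |B i|, fun k => ?_⟩
    rw [mem_closedBall_zero_iff, pi_norm_le_iff_of_nonneg (Finset.sum_nonneg fun i _ => abs_nonneg _)]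
    intro i
    exact (hB i k).trans ((le_abs_self _).trans
      (Finset.single_le_sum (f := fun i => |B i|) (fun i _ => abs_nonneg _) (Finset.mem_univ i)))
  obtain ⟨B, hB⟩ := hbdd
  obtain ⟨q', -, ψ, hψ, hlim⟩ := tendsto_subseq_of_bounded Metric.isBounded_closedBall hB
  have hq' : q' = p := by
    apply hGF
    · refine ⟨fun f hf => ?_, ?_⟩
      · have h1 := ((MvPolynomial.continuous_eval f).tendsto q').comp hlim
        refine tendsto_nhds_unique h1 ?_
        simp [Function.comp_def, hq _ f hf]
      · have h1 := (hbc.tendsto q').comp hlim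
        refine tendsto_nhds_unique h1 ?_
        have := hβt.comp hψ.tendsto_atTop
        refine this.congr fun k => ?_
        simp [hqb]
    · have h1 := ((MvPolynomial.continuous_eval G).tendsto q').comp hlim
      refine tendsto_nhds_unique h1 ?_
      have := hτ0.comp hψ.tendsto_atTop
      refine this.congr fun k => ?_
      have h2 := hqG (ψ k)
      rw [hφ] at h2
      simp [h2]
  rw [← hq']
  refine mem_closure_of_tendsto hlim (Filter.Eventually.of_forall fun k => ?_)
  refine ⟨hq _, hhs _ (hq _) ?_⟩
  rw [Function.comp_apply, hqb]
  exact hβ _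

theorem density {σ : Type} [Fintype σ] (Q : Ideal (MvPolynomial σ ℂ)) [Q.IsPrime]
    (s : MvPolynomial σ ℂ) (hs : s ∉ Q) (p : σ → ℂ) (hp : ∀ f ∈ Q, eval p f = 0) :
    p ∈ closure {q : σ → ℂ | (∀ f ∈ Q, eval q f = 0) ∧ eval q s ≠ 0} := by
  obtain ⟨r, g, ginj, gint⟩ := exists_integral_inj_algHom_of_fg ℂ (MvPolynomial σ ℂ ⧸ Q)
  let _ : Algebra (MvPolynomial (Fin r) ℂ) (MvPolynomial σ ℂ ⧸ Q) := g.toRingHom.toAlgebra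
  have : Algebra.IsIntegral (MvPolynomial (Fin r) ℂ) (MvPolynomial σ ℂ ⧸ Q) := ⟨gint⟩
  have : FaithfulSMul (MvPolynomial (Fin r) ℂ) (MvPolynomial σ ℂ ⧸ Q) :=
    (faithfulSMul_iff_algebraMap_injective _ _).2 ginj
  have := density_aux (r := r) (Ideal.Quotient.mk Q) Ideal.Quotient.mk_surjective
    (fun c => (g.commutes c).symm) s (fun h => hs (Ideal.Quotient.eq_zero_iff_mem.1 h)) p
    (fun f hf => hp f (Ideal.Quotient.eq_zero_iff_mem.1 hf))
  simpa only [Ideal.Quotient.eq_zero_iff_mem] using this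

end

section
open MvPolynomial

theorem exists_homogenization {n : ℕ} (f : MvPolynomial (Fin n) ℂ) :
    ∃ (N : ℕ) (F : MvPolynomial (Option (Fin n)) ℂ), ∀ (E : Type) [Field E] [Algebra ℂ E]
      (w : Option (Fin n) → E), w none ≠ 0 →
      aeval w F = w none ^ N * aeval (fun j => w (some j) / w none) f := by
  induction f using MvPolynomial.induction_on with
  | C c => exact ⟨0, C c, fun E _ _ w hw => by simp⟩
  | add p q hp hq =>
    obtain ⟨N, F, hF⟩ := hp
    obtain ⟨N', F', hF'⟩ := hq
    refine ⟨N + N', X none ^ N' * F + X none ^ N * F', fun E _ _ w hw => ?_⟩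
    simp only [map_add, map_mul, map_pow, aeval_X, hF E w hw, hF' E w hw]
    ring
  | mul_X p i hp =>
    obtain ⟨N, F, hF⟩ := hp
    refine ⟨N + 1, F * X (some i), fun E _ _ w hw => ?_⟩
    simp only [map_mul, aeval_X, hF E w hw]
    field_simp
    ring

theorem valuation_core {n d : ℕ} {E : Type} [Field E] [Algebra ℂ E] (x : Fin n → E)
    (l : Fin d → Fin n → ℂ) (K : ℝ)
    (hgrow : ∀ u : Fin n → ℂ, (∀ f : MvPolynomial (Fin n) ℂ, aeval x f = 0 → eval u f = 0) →
      ∀ i, ‖u i‖ ≤ K * (1 + ‖fun j => ∑ i, l j i * u i‖))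
    (O : ValuationSubring E) (hC : ∀ c : ℂ, algebraMap ℂ E c ∈ O)
    (hy : ∀ j, ∑ i, algebraMap ℂ E (l j i) * x i ∈ O) (i : Fin n) (hi : x i ∉ O) : False := by
  obtain ⟨i₀, -, hi₀⟩ := Finset.exists_max_image Finset.univ (fun i => O.valuation (x i)) ⟨i, Finset.mem_univ i⟩
  have hgt : 1 < O.valuation (x i₀) := by
    refine lt_of_lt_of_le ?_ (hi₀ i (Finset.mem_univ i))
    rw [← not_le, O.valuation_le_one_iff]; exact hi
  have hne : x i₀ ≠ 0 := by
    intro h; rw [h, map_zero] at hgt; exact absurd hgt (by simp)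
  have hvs : O.valuation (x i₀)⁻¹ < 1 := by
    rw [map_inv₀]; exact inv_lt_one_of_one_lt₀ hgt
  let z : Option (Fin n) → E := fun o => o.elim (x i₀)⁻¹ (fun j => x j * (x i₀)⁻¹)
  have hz : ∀ o, z o ∈ O := by
    intro o
    rw [← O.valuation_le_one_iff]
    cases o with
    | none => exact hvs.le
    | some j =>
      change O.valuation (x j * (x i₀)⁻¹) ≤ 1
      rw [map_mul, map_inv₀]
      exact mul_inv_le_one_of_le₀ (hi₀ j (Finset.mem_univ j)) (zero_le)
  let cO : ℂ →+* O := (algebraMap ℂ E).codRestrict O.toSubring hC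
  let ev : MvPolynomial (Option (Fin n)) ℂ →+* O := eval₂Hom cO (fun o => ⟨z o, hz o⟩)
  have hev : ∀ f, ((ev f : O) : E) = aeval z f := by
    intro f
    have : (O.subtype).comp ev = (aeval z : MvPolynomial (Option (Fin n)) ℂ →ₐ[ℂ] E).toRingHom := by
      apply MvPolynomial.ringHom_ext
      · intro c; simp [ev, cO]
      · intro o; simp [ev]
    exact congrArg (fun h => h f) this
  let M := (IsLocalRing.maximalIdeal O).comap ev
  have hM : ∀ f, O.valuation (aeval z f) < 1 → f ∈ M := by
    intro f hf
    rw [Ideal.mem_comap, ValuationSubring.valuation_lt_one_iff, hev]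
    exact hf
  obtain ⟨p, hp⟩ := exists_zero M (Ideal.comap_ne_top _ (Ideal.IsPrime.ne_top inferInstance))
  have hp0 : p none = 0 := by simpa using hp (X none) (hM _ (by simpa [z] using hvs))
  have hpi : p (some i₀) = 1 := by
    have := hp (X (some i₀) - 1) (hM _ (by simp [z, hne]))
    simpa [sub_eq_zero] using this
  have hpl : ∀ j, ∑ i, l j i * p (some i) = 0 := by
    intro j
    have := hp (∑ i, C (l j i) * X (some i)) (hM _ (by
      have : aeval z (∑ i, C (l j i) * X (some i)) = (∑ i, algebraMap ℂ E (l j i) * x i) * (x i₀)⁻¹ := by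
        simp [z, Finset.sum_mul, mul_assoc]
      rw [this, map_mul]
      exact lt_of_le_of_lt (mul_le_of_le_one_left zero_le ((O.valuation_le_one_iff _).2 (hy j))) hvs))
    simpa using this
  let Q : Ideal (MvPolynomial (Option (Fin n)) ℂ) := RingHom.ker (aeval z : MvPolynomial (Option (Fin n)) ℂ →ₐ[ℂ] E)
  have : Q.IsPrime := RingHom.ker_isPrime _
  have hcl := density Q (X none) (by
    intro h
    have : aeval z (X none : MvPolynomial (Option (Fin n)) ℂ) = 0 := h
    simp [z, hne] at this) p (by
    intro f hf
    apply hp f (hM f _)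
    have : aeval z f = 0 := hf
    simp [this])
  let T : Set (Option (Fin n) → ℂ) := {q | ‖q (some i₀)‖ ≤ K * (‖q none‖ + ‖fun j => ∑ i, l j i * q (some i)‖)}
  have hT : IsClosed T := by
    apply isClosed_le
    · fun_prop
    · fun_prop
  have hsub : {q : Option (Fin n) → ℂ | (∀ f ∈ Q, eval q f = 0) ∧ eval q (X none) ≠ 0} ⊆ T := by
    rintro q ⟨hq, hq0⟩
    rw [eval_X] at hq0
    have hu := hgrow (fun j => q (some j) / q none) (by
      intro f hf
      obtain ⟨N, F, hF⟩ := exists_homogenization f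
      have h1 := hq F (by
        change aeval z F = 0
        rw [hF E z (by simp [z, hne])]
        have : (fun j => z (some j) / z none) = x := by
          funext j; simp [z, hne]
        rw [this, hf, mul_zero])
      have h2 := hF ℂ q hq0
      rw [MvPolynomial.aeval_eq_eval, MvPolynomial.aeval_eq_eval] at h2
      change eval q F = _ at h2
      rw [h1] at h2
      rcases mul_eq_zero.1 h2.symm with h | h
      · exact absurd h (pow_ne_zero _ hq0)
      · exact h) i₀
    have hqn : 0 < ‖q none‖ := norm_pos_iff.2 hq0
    have heq : (fun j => ∑ i, l j i * (q (some i) / q none)) = (q none)⁻¹ • (fun j => ∑ i, l j i * q (some i)) := by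
      funext j
      simp only [Pi.smul_apply, smul_eq_mul, Finset.mul_sum]
      exact Finset.sum_congr rfl fun i _ => by field_simp
    rw [heq, norm_smul, norm_div, norm_inv, div_le_iff₀ hqn] at hu
    change ‖q (some i₀)‖ ≤ K * (‖q none‖ + ‖fun j => ∑ i, l j i * q (some i)‖)
    refine hu.trans (le_of_eq ?_)
    field_simp
  have hpT : p ∈ T := hT.closure_subset_iff.2 hsub hcl
  have : ‖p (some i₀)‖ ≤ K * (‖p none‖ + ‖fun j => ∑ i, l j i * p (some i)‖) := hpT
  have h0 : (fun j => ∑ i, l j i * p (some i)) = 0 := funext hpl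
  rw [hpi, hp0, h0] at this
  simp at this
  linarith

theorem exists_valuation_of_not_integral {R : Type} {E : Type} [CommRing R] [Field E] (ρ : R →+* E) (x : E)
    (hx : ¬ ρ.IsIntegralElem x) : ∃ O : ValuationSubring E, (∀ r, ρ r ∈ O) ∧ x ∉ O := by
  by_contra! H
  apply hx
  have h1 : x ∈ (⨅ V : {V : ValuationSubring E // (ρ.range : Set E) ⊆ V.toSubring}, V.1.toSubring) := by
    rw [Subring.mem_iInf]
    rintro ⟨V, hV⟩
    exact H V fun r => hV ⟨r, rfl⟩
  rw [iInf_valuationSubring_superset, Subring.closure_eq] at h1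
  have h2 : IsIntegral ρ.range x := h1
  let _ : Algebra R E := ρ.toAlgebra
  let _ : Algebra R ρ.range := ρ.rangeRestrict.toAlgebra
  have : IsScalarTower R ρ.range E := IsScalarTower.of_algebraMap_eq fun r => rfl
  have : Algebra.IsIntegral R ρ.range := ⟨RingHom.isIntegral_of_surjective _ ρ.rangeRestrict_surjective⟩
  exact isIntegral_trans (R := R) (A := ρ.range) x h2

theorem exists_field_of_prime {A : Type} [CommRing A] (P : Ideal A) [P.IsPrime] :
    ∃ (E : Type) (_ : Field E) (κ : A →+* E), ∀ a, κ a = 0 → a ∈ P := by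
  refine ⟨FractionRing (A ⧸ P), inferInstance,
    (algebraMap (A ⧸ P) (FractionRing (A ⧸ P))).comp (Ideal.Quotient.mk P), fun a ha => ?_⟩
  have : Ideal.Quotient.mk P a = 0 := by
    apply IsFractionRing.injective (A ⧸ P) (FractionRing (A ⧸ P))
    rw [map_zero]; exact ha
  exact Ideal.Quotient.eq_zero_iff_mem.1 this

theorem integral_of_growth {n d : ℕ} (I₀ : Ideal (MvPolynomial (Fin n) ℂ))
    (l : Fin d → Fin n → ℂ) (K : ℝ)
    (hgrow : ∀ u : Fin n → ℂ, (∀ f ∈ I₀, eval u f = 0) →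
      ∀ i, ‖u i‖ ≤ K * (1 + ‖fun j => ∑ i, l j i * u i‖)) :
    ((Ideal.Quotient.mk I₀).comp
      (aeval (fun j => ∑ i, C (l j i) * X i) : MvPolynomial (Fin d) ℂ →ₐ[ℂ] MvPolynomial (Fin n) ℂ).toRingHom).IsIntegral := by
  set θ := ((Ideal.Quotient.mk I₀).comp
      (aeval (fun j => ∑ i, C (l j i) * X i) : MvPolynomial (Fin d) ℂ →ₐ[ℂ] MvPolynomial (Fin n) ℂ).toRingHom) with hθ
  have hθC : ∀ c, θ (C c) = Ideal.Quotient.mk I₀ (C c) := by intro c; simp [hθ]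
  have hθX : ∀ j, θ (X j) = Ideal.Quotient.mk I₀ (∑ i, C (l j i) * X i) := by intro c; simp [hθ]
  suffices hX : ∀ i, θ.IsIntegralElem (Ideal.Quotient.mk I₀ (X i)) by
    intro a
    obtain ⟨f, rfl⟩ := Ideal.Quotient.mk_surjective a
    induction f using MvPolynomial.induction_on with
    | C c => rw [← hθC]; exact θ.isIntegralElem_map
    | add p q hp hq => rw [map_add]; exact RingHom.IsIntegralElem.add _ hp hq
    | mul_X p i hp => rw [map_mul]; exact RingHom.IsIntegralElem.mul _ hp (hX i)
  intro i
  by_contra hi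
  let x₀ := Ideal.Quotient.mk I₀ (X i)
  let Sg : Submonoid (MvPolynomial (Fin n) ℂ ⧸ I₀) :=
    { carrier := {a | ∃ f : Polynomial (MvPolynomial (Fin d) ℂ), f.Monic ∧ f.eval₂ θ x₀ = a}
      one_mem' := ⟨1, Polynomial.monic_one, by simp⟩
      mul_mem' := by
        rintro _ _ ⟨f, hf, rfl⟩ ⟨g, hg, rfl⟩
        exact ⟨f * g, hf.mul hg, Polynomial.eval₂_mul _ _⟩ }
  obtain ⟨P, hP, -, hdisj⟩ := Ideal.exists_le_prime_disjoint (⊥ : Ideal (MvPolynomial (Fin n) ℂ ⧸ I₀)) Sg (by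
    rw [Set.disjoint_left]
    rintro a ha ⟨f, hf, hfa⟩
    have : a = 0 := by simpa using ha
    exact hi ⟨f, hf, hfa.trans this⟩)
  obtain ⟨E, instE, κ, hκ⟩ := exists_field_of_prime P
  obtain ⟨O, hO, hxO⟩ := exists_valuation_of_not_integral (κ.comp θ) (κ x₀) (by
    rintro ⟨f, hf, hfx⟩
    rw [← Polynomial.hom_eval₂] at hfx
    exact Set.disjoint_left.1 hdisj (hκ _ hfx) ⟨f, hf, rfl⟩)
  let _ : Algebra ℂ E := ((κ.comp θ).comp C).toAlgebra
  have halg : ∀ c, algebraMap ℂ E c = κ (θ (C c)) := fun c => rfl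
  let x : Fin n → E := fun i => κ (Ideal.Quotient.mk I₀ (X i))
  have hx : ∀ f, aeval x f = κ (Ideal.Quotient.mk I₀ f) := by
    intro f
    have : (aeval x : MvPolynomial (Fin n) ℂ →ₐ[ℂ] E).toRingHom = κ.comp (Ideal.Quotient.mk I₀) := by
      apply MvPolynomial.ringHom_ext
      · intro c; simp [halg, hθC]
      · intro j; simp [x]
    exact congrArg (fun h => h f) this
  refine valuation_core x l K ?_ O (fun c => hO (C c)) ?_ i hxO
  · intro u hu
    apply hgrow u
    intro f hf
    apply hu
    rw [hx, Ideal.Quotient.eq_zero_iff_mem.2 hf, map_zero]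
  · intro j
    have := hO (X j)
    rw [RingHom.comp_apply, hθX] at this
    convert this using 1
    rw [← hx]
    simp

end

end AlgLemmas

section ConeLemmas
open Filter Topology

/-- The linear map given by a matrix of coefficients. -/
noncomputable def coneLin {n d : ℕ} (l : Fin d → Fin n → ℂ) (z : EuclideanSpace ℂ (Fin n)) :
    Fin d → ℂ := fun j => ∑ i, l j i * z i

theorem coneLin_smul {n d : ℕ} (l : Fin d → Fin n → ℂ) (t : ℂ) (z : EuclideanSpace ℂ (Fin n)) :
    coneLin l (t • z) = t • coneLin l z := by
  funext j
  simp only [coneLin, PiLp.smul_apply, Pi.smul_apply, smul_eq_mul, Finset.mul_sum]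
  exact Finset.sum_congr rfl fun i _ => by ring

theorem coneLin_continuous {n d : ℕ} (l : Fin d → Fin n → ℂ) : Continuous (coneLin l) := by
  unfold coneLin
  fun_prop

theorem cone_growth {n d : ℕ} (l : Fin d → Fin n → ℂ) (W : Set (EuclideanSpace ℂ (Fin n)))
    (h : ∀ v ∈ geomTangentConeAtInfty n W, coneLin l v = 0 → v = 0) :
    ∃ K : ℝ, ∀ x ∈ W, ‖x‖ ≤ K * (1 + ‖coneLin l x‖) := by
  by_contra! H
  choose x hxW hx using fun k : ℕ => H (k : ℝ)
  have hpos : ∀ k, 0 < ‖x k‖ := fun k => lt_of_le_of_lt (by positivity) (hx k)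
  have hge : ∀ k : ℕ, (k : ℝ) ≤ ‖x k‖ := fun k => by
    have := hx k
    have h2 : 0 ≤ (k : ℝ) * ‖coneLin l (x k)‖ := by positivity
    linarith
  let y : ℕ → EuclideanSpace ℂ (Fin n) := fun k => ((‖x k‖ : ℂ)⁻¹) • x k
  have hy : ∀ k, y k ∈ Metric.sphere (0 : EuclideanSpace ℂ (Fin n)) 1 := by
    intro k
    simp [y, norm_smul, (hpos k).ne']
  obtain ⟨v, hv, φ, hφ, hlim⟩ := (isCompact_sphere (0 : EuclideanSpace ℂ (Fin n)) 1).tendsto_subseq hy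
  have hv0 : v ≠ 0 := by
    rintro rfl
    simp at hv
  apply hv0
  apply h v
  · refine ⟨x ∘ φ, fun k => (‖x (φ k)‖ : ℂ)⁻¹, fun k => hxW _, ?_, hlim⟩
    exact (tendsto_atTop_mono hge tendsto_natCast_atTop_atTop).comp hφ.tendsto_atTop
  · have h1 : Tendsto (fun k => coneLin l (y (φ k))) atTop (𝓝 (coneLin l v)) :=
      ((coneLin_continuous l).tendsto v).comp hlim
    have h2 : Tendsto (fun k => coneLin l (y k)) atTop (𝓝 0) := by
      apply squeeze_zero_norm' _ (tendsto_one_div_atTop_nhds_zero_nat (𝕜 := ℝ))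
      filter_upwards [eventually_gt_atTop 0] with k hk
      have hk' : (0 : ℝ) < k := by exact_mod_cast hk
      simp only [y, coneLin_smul, norm_smul, norm_inv, Complex.norm_real, norm_norm]
      rw [inv_mul_eq_div, div_le_div_iff₀ (hpos k) hk']
      have := hx k
      nlinarith
    exact tendsto_nhds_unique h1 (h2.comp hφ.tendsto_atTop)

theorem cone_smul_mem {n : ℕ} {W : Set (EuclideanSpace ℂ (Fin n))} {v : EuclideanSpace ℂ (Fin n)}
    (hv : v ∈ geomTangentConeAtInfty n W) (c : ℂ) : c • v ∈ geomTangentConeAtInfty n W := by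
  obtain ⟨x, t, hx, hinf, hlim⟩ := hv
  refine ⟨x, fun j => c * t j, hx, hinf, ?_⟩
  simp only [mul_smul]
  exact hlim.const_smul c

theorem cone_exists_ne_zero {n : ℕ} {W : Set (EuclideanSpace ℂ (Fin n))}
    (hW : ¬ Bornology.IsBounded W) : ∃ v ∈ geomTangentConeAtInfty n W, v ≠ 0 := by
  by_contra! H
  obtain ⟨K, hK⟩ := cone_growth (d := 0) Fin.elim0 W (fun v hv _ => H v hv)
  apply hW
  rw [isBounded_iff_forall_norm_le]
  refine ⟨K, fun x hx => ?_⟩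
  have h0 : coneLin (n := n) (d := 0) Fin.elim0 x = 0 := Subsingleton.elim _ _
  have := hK x hx
  rwa [h0, norm_zero, add_zero, mul_one] at this

theorem cone_subset_cone {n : ℕ} {S : Set (EuclideanSpace ℂ (Fin n))}
    (hS : ∀ v ∈ S, ∀ c : ℂ, c • v ∈ S) (hne : ∃ v ∈ S, v ≠ 0) : S ⊆ geomTangentConeAtInfty n S := by
  have key : ∀ v ∈ S, v ≠ 0 → v ∈ geomTangentConeAtInfty n S := by
    intro v hv hv0
    refine ⟨fun j => ((j : ℂ) + 1) • v, fun j => ((j : ℂ) + 1)⁻¹, fun j => hS v hv _, ?_, ?_⟩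
    · have : ∀ j : ℕ, ‖((j : ℂ) + 1) • v‖ = ((j : ℝ) + 1) * ‖v‖ := by
        intro j
        rw [norm_smul]
        congr 1
        have : ((j : ℂ) + 1) = (((j : ℝ) + 1 : ℝ) : ℂ) := by push_cast; rfl
        rw [this, Complex.norm_real, Real.norm_of_nonneg (by positivity)]
      simp only [this]
      exact (tendsto_atTop_add_const_right _ _ tendsto_natCast_atTop_atTop).atTop_mul_const (norm_pos_iff.2 hv0)
    · have : ∀ j : ℕ, ((j : ℂ) + 1)⁻¹ • (((j : ℂ) + 1) • v) = v := by
        intro j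
        rw [smul_smul, inv_mul_cancel₀ (Nat.cast_add_one_ne_zero j), one_smul]
      simp only [this]
      exact tendsto_const_nhds
  intro v hv
  by_cases hv0 : v = 0
  · obtain ⟨u, hu, hu0⟩ := hne
    have := cone_smul_mem (key u hu hu0) 0
    rwa [zero_smul, ← hv0] at this
  · exact key v hv hv0

theorem homog_eval_smul {d N : ℕ} {g : MvPolynomial (Fin d) ℂ} (hg : g.IsHomogeneous N) (t : ℂ)
    (w : Fin d → ℂ) : MvPolynomial.eval (t • w) g = t ^ N * MvPolynomial.eval w g := by
  rw [MvPolynomial.eval_eq, MvPolynomial.eval_eq, Finset.mul_sum]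
  refine Finset.sum_congr rfl fun m hm => ?_
  have h1 : ∑ i ∈ m.support, m i = N := by
    have := hg (MvPolynomial.mem_support_iff.1 hm)
    rw [← this, Finsupp.weight_apply, Finsupp.sum]
    simp
  simp only [Pi.smul_apply, smul_eq_mul, mul_pow, Finset.prod_mul_distrib]
  rw [Finset.prod_pow_eq_pow_sum, h1]
  ring

theorem cone_topForm {n d : ℕ} (l : Fin d → Fin n → ℂ) {W : Set (EuclideanSpace ℂ (Fin n))}
    (f : MvPolynomial (Fin d) ℂ) (hf : ∀ x ∈ W, MvPolynomial.eval (coneLin l x) f = 0)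
    {v : EuclideanSpace ℂ (Fin n)} (hv : v ∈ geomTangentConeAtInfty n W) :
    MvPolynomial.eval (coneLin l v) (MvPolynomial.homogeneousComponent f.totalDegree f) = 0 := by
  obtain ⟨x, t, hx, hinf, hlim⟩ := hv
  have ht : Tendsto t atTop (𝓝 0) := by
    rw [tendsto_zero_iff_norm_tendsto_zero]
    refine (hlim.norm.div_atTop hinf).congr' ?_
    filter_upwards [hinf.eventually_gt_atTop 0] with j hj
    rw [norm_smul]
    field_simp
  set N := f.totalDegree
  have hz : ∀ j, ∑ i ∈ Finset.range (N + 1), t j ^ (N - i) *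
      MvPolynomial.eval (coneLin l (t j • x j)) (MvPolynomial.homogeneousComponent i f) = 0 := by
    intro j
    have h1 : ∑ i ∈ Finset.range (N + 1), MvPolynomial.eval (coneLin l (x j))
        (MvPolynomial.homogeneousComponent i f) = 0 := by
      rw [← map_sum, MvPolynomial.sum_homogeneousComponent, hf _ (hx j)]
    rw [← mul_zero (t j ^ N), ← h1, Finset.mul_sum]
    refine Finset.sum_congr rfl fun i hi => ?_
    rw [coneLin_smul, homog_eval_smul (MvPolynomial.homogeneousComponent_isHomogeneous i f),
      ← mul_assoc, ← pow_add, Nat.sub_add_cancel (Nat.lt_succ_iff.1 (Finset.mem_range.1 hi))]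
  have hl : Tendsto (fun j => ∑ i ∈ Finset.range (N + 1), t j ^ (N - i) *
      MvPolynomial.eval (coneLin l (t j • x j)) (MvPolynomial.homogeneousComponent i f)) atTop
      (𝓝 (∑ i ∈ Finset.range (N + 1), (0 : ℂ) ^ (N - i) *
      MvPolynomial.eval (coneLin l v) (MvPolynomial.homogeneousComponent i f))) := by
    refine tendsto_finsetSum _ fun i _ => ?_
    refine (ht.pow _).mul ?_
    exact (((MvPolynomial.continuous_eval _).comp (coneLin_continuous l)).tendsto v).comp hlim
  simp only [hz] at hl
  have := tendsto_nhds_unique hl tendsto_const_nhds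
  rw [Finset.sum_range_succ, Finset.sum_eq_zero] at this
  · simpa using this
  · intro i hi
    rw [zero_pow, zero_mul]
    have := Finset.mem_range.1 hi
    omega

theorem topForm_ne_zero {d : ℕ} {f : MvPolynomial (Fin d) ℂ} (hf : f ≠ 0) :
    MvPolynomial.homogeneousComponent f.totalDegree f ≠ 0 := by
  obtain ⟨m, hm, hmax⟩ := Finset.exists_mem_eq_sup f.support
    (MvPolynomial.support_nonempty.2 hf) (fun s => s.sum fun _ e => e)
  intro h
  have h1 := congrArg (MvPolynomial.coeff m) h
  rw [MvPolynomial.coeff_homogeneousComponent, if_pos] at h1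
  · exact MvPolynomial.mem_support_iff.1 hm h1
  · exact hmax.symm

theorem eval_coneLin {n d : ℕ} (l : Fin d → Fin n → ℂ) (z : EuclideanSpace ℂ (Fin n))
    (f : MvPolynomial (Fin d) ℂ) :
    MvPolynomial.eval (fun i => z i) (MvPolynomial.aeval
      (fun j => ∑ i, MvPolynomial.C (l j i) * MvPolynomial.X i : Fin d → MvPolynomial (Fin n) ℂ) f) =
      MvPolynomial.eval (coneLin l z) f := by
  induction f using MvPolynomial.induction_on with
  | C c => simp
  | add p q hp hq => simp only [map_add, hp, hq]
  | mul_X p j hp => rw [map_mul, map_mul, hp, map_mul]; simp [coneLin]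

theorem algDim_of_growth {n d : ℕ} (l : Fin d → Fin n → ℂ) (S : Set (EuclideanSpace ℂ (Fin n)))
    (hgr : ∀ v ∈ geomTangentConeAtInfty n {z | ∀ g ∈ vanishingIdeal n S,
      MvPolynomial.eval (fun i => z i) g = 0}, coneLin l v = 0 → v = 0)
    (hinj : ∀ f : MvPolynomial (Fin d) ℂ,
      (∀ x ∈ S, MvPolynomial.eval (coneLin l x) f = 0) → f = 0) :
    algDim n S = ringKrullDim (MvPolynomial (Fin d) ℂ) := by
  obtain ⟨K, hK⟩ := cone_growth l _ hgr
  have hInteg := integral_of_growth (vanishingIdeal n S) l K (by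
    intro u hu i
    have h1 := hK (WithLp.toLp 2 u) hu
    exact (PiLp.norm_apply_le (WithLp.toLp 2 u) i).trans h1)
  set θ := ((Ideal.Quotient.mk (vanishingIdeal n S)).comp
      (MvPolynomial.aeval (fun j => ∑ i, MvPolynomial.C (l j i) * MvPolynomial.X i) :
        MvPolynomial (Fin d) ℂ →ₐ[ℂ] MvPolynomial (Fin n) ℂ).toRingHom) with hθ
  have hθinj : Function.Injective θ := by
    rw [injective_iff_map_eq_zero]
    intro f hf
    apply hinj f
    intro x hx
    rw [← eval_coneLin]
    exact Ideal.Quotient.eq_zero_iff_mem.1 hf x hx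
  let _ : Algebra (MvPolynomial (Fin d) ℂ) (MvPolynomial (Fin n) ℂ ⧸ vanishingIdeal n S) :=
    θ.toAlgebra
  have : Algebra.IsIntegral (MvPolynomial (Fin d) ℂ)
    (MvPolynomial (Fin n) ℂ ⧸ vanishingIdeal n S) := ⟨hInteg⟩
  exact (kd_integral hθinj).symm

theorem cone_reduce {n d N : ℕ} (l : Fin d → Fin n → ℂ) (Z : Set (EuclideanSpace ℂ (Fin n)))
    (hl : ∀ v ∈ Z, coneLin l v = 0 → v = 0) (f : MvPolynomial (Fin d) ℂ) (hf : f.IsHomogeneous N)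
    (hf0 : f ≠ 0) (hZ0 : (0 : EuclideanSpace ℂ (Fin n)) ∈ Z)
    (hfZ : ∀ v ∈ Z, MvPolynomial.eval (coneLin l v) f = 0) :
    ∃ d' < d, ∃ l' : Fin d' → Fin n → ℂ, ∀ v ∈ Z, coneLin l' v = 0 → v = 0 := by
  obtain ⟨a, ha⟩ : ∃ a, MvPolynomial.eval a f ≠ 0 := by
    by_contra! H
    exact hf0 (MvPolynomial.funext (by simpa using H))
  have hL0 : coneLin l (0 : EuclideanSpace ℂ (Fin n)) = 0 := by
    have := coneLin_smul l 0 0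
    simpa using this
  have h0 := hfZ 0 hZ0
  rw [hL0] at h0
  have ha0 : a ≠ 0 := by
    rintro rfl
    exact ha h0
  obtain ⟨i₀, hi₀⟩ := Function.ne_iff.1 ha0
  have hi₀' : a i₀ ≠ 0 := hi₀
  obtain ⟨d', rfl⟩ : ∃ d', d = d' + 1 := ⟨d - 1, by have := i₀.2; omega⟩
  refine ⟨d', Nat.lt_succ_self _,
    fun k i => l (i₀.succAbove k) i - a (i₀.succAbove k) / a i₀ * l i₀ i, fun v hv hv0 => ?_⟩
  have hk : ∀ k, coneLin l v (i₀.succAbove k) = a (i₀.succAbove k) / a i₀ * coneLin l v i₀ := by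
    intro k
    have := congrFun hv0 k
    simp only [coneLin, sub_mul, Finset.sum_sub_distrib, Pi.zero_apply, mul_assoc] at this
    rw [← Finset.mul_sum] at this
    exact sub_eq_zero.1 this
  have hLa : coneLin l v = (coneLin l v i₀ / a i₀) • a := by
    funext j
    rcases Fin.eq_self_or_eq_succAbove i₀ j with rfl | ⟨k, rfl⟩
    · simp [hi₀']
    · rw [hk k]
      simp only [Pi.smul_apply, smul_eq_mul]
      ring
  have h1 := hfZ v hv
  rw [hLa, homog_eval_smul hf] at h1
  have h2 : coneLin l v i₀ / a i₀ = 0 :=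
    eq_zero_of_pow_eq_zero ((mul_eq_zero.1 h1).resolve_right ha)
  apply hl v hv
  rw [hLa, h2, zero_smul]

end ConeLemmas

/-- Let `V ⊆ ℂⁿ` be an unbounded complex algebraic set (the common
zero locus of an ideal `I` of `ℂ[x₁, …, xₙ]`).  Then `dim V = dim C_∞(V)`, where
`C_∞(V)` is the geometric tangent cone of `V` at infinity and, for a subset
`S ⊆ ℂⁿ`, `dim S` is the Krull dimension of `ℂ[x₁, …, xₙ]/I(S)` with `I(S)` the
vanishing ideal of `S`. -/
theorem statement4 (n : ℕ) (hn : 2 ≤ n)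
    (I : Ideal (MvPolynomial (Fin n) ℂ))
    (V : Set (EuclideanSpace ℂ (Fin n)))
    (hValg : V = {z | ∀ f ∈ I, MvPolynomial.eval (fun i => z i) f = 0})
    (hVunbdd : ¬ Bornology.IsBounded V) :
    algDim n V = algDim n (geomTangentConeAtInfty n V) := by
  set C := geomTangentConeAtInfty n V with hC
  obtain ⟨u, huC, hu0⟩ := cone_exists_ne_zero hVunbdd
  let Z : Set (EuclideanSpace ℂ (Fin n)) :=
    {z | ∀ g ∈ vanishingIdeal n C, MvPolynomial.eval (fun i => z i) g = 0}
  have hCZ : C ⊆ Z := fun z hz g hg => hg z hz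
  have h0C : (0 : EuclideanSpace ℂ (Fin n)) ∈ C := by
    have := cone_smul_mem huC 0
    rwa [zero_smul] at this
  have hZclosed : IsClosed Z := by
    have : Z = ⋂ g ∈ vanishingIdeal n C, {z | MvPolynomial.eval (fun i => z i) g = 0} := by
      ext z; simp [Z]
    rw [this]
    refine isClosed_biInter fun g _ => isClosed_eq ?_ continuous_const
    exact (MvPolynomial.continuous_eval g).comp (by fun_prop)
  have hZsmul : ∀ z ∈ Z, ∀ c : ℂ, c • z ∈ Z := by
    intro z hz c g hg
    have key : ∀ w : EuclideanSpace ℂ (Fin n), MvPolynomial.eval (fun i => w i)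
        (MvPolynomial.aeval (fun i => MvPolynomial.C c * MvPolynomial.X i :
          Fin n → MvPolynomial (Fin n) ℂ) g) = MvPolynomial.eval (fun i => (c • w) i) g := by
      intro w
      clear hg
      induction g using MvPolynomial.induction_on with
      | C c => simp
      | add p q hp hq => simp only [map_add, hp, hq]
      | mul_X p j hp => rw [map_mul, map_mul, hp, map_mul]; simp
    rw [← key]
    apply hz
    intro w hw
    rw [key]
    exact hg _ (cone_smul_mem hw c)
  have hZcone : geomTangentConeAtInfty n Z ⊆ Z := by
    rintro v ⟨x, t, hx, -, hlim⟩
    exact hZclosed.mem_of_tendsto hlim (Filter.Eventually.of_forall fun j => hZsmul _ (hx j) _)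
  have hVZ : {z : EuclideanSpace ℂ (Fin n) | ∀ g ∈ vanishingIdeal n V,
      MvPolynomial.eval (fun i => z i) g = 0} = V := by
    apply Set.Subset.antisymm
    · intro z hz
      rw [hValg]
      intro f hf
      apply hz f
      intro w hw
      rw [hValg] at hw
      exact hw f hf
    · intro z hz g hg
      exact hg z hz
  classical
  have hex : ∃ d, ∃ l : Fin d → Fin n → ℂ, ∀ v ∈ Z, coneLin l v = 0 → v = 0 := by
    refine ⟨n, fun j i => if j = i then 1 else 0, fun v _ hv => ?_⟩
    ext j
    have := congrFun hv j
    simpa [coneLin] using this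
  obtain ⟨l, hl⟩ := Nat.find_spec hex
  have hmin : ∀ (N : ℕ) (f : MvPolynomial (Fin (Nat.find hex)) ℂ), f.IsHomogeneous N →
      (∀ v ∈ C, MvPolynomial.eval (coneLin l v) f = 0) → f = 0 := by
    intro N f hf hfC
    by_contra hf0
    obtain ⟨d', hd', h⟩ := cone_reduce l Z hl f hf hf0 (hCZ h0C) (by
      intro v hv
      rw [← eval_coneLin]
      apply hv
      intro w hw
      rw [eval_coneLin]
      exact hfC w hw)
    exact Nat.find_min hex hd' h
  have hinj : ∀ W : Set (EuclideanSpace ℂ (Fin n)), C ⊆ geomTangentConeAtInfty n W →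
      ∀ f : MvPolynomial (Fin (Nat.find hex)) ℂ,
      (∀ x ∈ W, MvPolynomial.eval (coneLin l x) f = 0) → f = 0 := by
    intro W hW f hf
    have h1 := hmin _ _ (MvPolynomial.homogeneousComponent_isHomogeneous f.totalDegree f)
      (fun v hv => cone_topForm l f hf (hW hv))
    by_contra hf0
    exact topForm_ne_zero hf0 h1
  rw [algDim_of_growth l V (by rw [hVZ]; exact fun v hv => hl v (hCZ hv)) (hinj V subset_rfl),
    algDim_of_growth l C (fun v hv => hl v (hZcone hv))
      (hinj C (cone_subset_cone (fun v hv c => cone_smul_mem hv c) ⟨u, huC, hu0⟩))]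
end
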